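/- There is a constant C > 0 such that almost every integer n satisfies ω(n) ≤ C log log n; precisely, (#{n : 3 ≤ n ≤ x and ω(n) > C log log n}) / x → 0 as x → ∞. -/

import Mathlib

open Finset
open scoped Classical

/-!
Distinct sets of primes dividing `n` have distinct products dividing `n`, so `2 ^ ω(n) ≤ d(n)`, and
`ω(n) > C log log n` forces `d(n) ≥ (log n) ^ (C log 2)`. Since `∑_{n ≤ x} d(n) = O(x log x)`,
Markov's inequality shows that this happens for `o(x)` of the `n ≤ x` once `C log 2 > 1`. The
threshold `(log n) ^ (C log 2)` is comparable to its value at `x` as soon as `n > √x`, and the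
`n ≤ √x` are negligible.
-/

lemma two_pow_card_primeFactors_le_card_divisors {n : ℕ} (hn : n ≠ 0) :
    2 ^ #n.primeFactors ≤ #n.divisors := by
  rw [Nat.card_divisors hn, ← prod_const]
  refine prod_le_prod' fun p hp => Nat.succ_le_succ ?_
  exact (Nat.prime_of_mem_primeFactors hp).factorization_pos_of_dvd hn
    (Nat.dvd_of_mem_primeFactors hp)

lemma sum_card_divisors_le {x : ℝ} (hx : 1 ≤ x) :
    ∑ n ∈ Ioc 0 ⌊x⌋₊, (#n.divisors : ℝ) ≤ x * (1 + Real.log x) := by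
  have hsum : ∑ n ∈ Ioc 0 ⌊x⌋₊, #n.divisors = ∑ n ∈ Ioc 0 ⌊x⌋₊, ⌊x⌋₊ / n := by
    simpa only [ArithmeticFunction.sigma_zero_apply] using
      ArithmeticFunction.sum_Ioc_sigma0_eq_sum_div ⌊x⌋₊
  calc ∑ n ∈ Ioc 0 ⌊x⌋₊, (#n.divisors : ℝ)
      = ∑ n ∈ Ioc 0 ⌊x⌋₊, ((⌊x⌋₊ / n : ℕ) : ℝ) := mod_cast hsum
    _ ≤ ∑ n ∈ Ioc 0 ⌊x⌋₊, x * (n : ℝ)⁻¹ := by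
        refine sum_le_sum fun n _ => Nat.cast_div_le.trans ?_
        rw [div_eq_mul_inv]
        gcongr
        exact Nat.floor_le (by linarith)
    _ = x * (harmonic ⌊x⌋₊ : ℝ) := by
        rw [← mul_sum, harmonic_eq_sum_Icc]
        push_cast
        rfl
    _ ≤ x * (1 + Real.log x) := by
        gcongr
        exact harmonic_floor_le_one_add_log x hx

lemma isBigO_sum_card_divisors :
    (fun x : ℝ => ∑ n ∈ Ioc 0 ⌊x⌋₊, (#n.divisors : ℝ)) =O[Filter.atTop]
      fun x => x * Real.log x := by
  refine .of_bound 2 ?_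
  filter_upwards [Filter.eventually_ge_atTop 1,
    Real.tendsto_log_atTop.eventually_ge_atTop 1] with x hx hlog
  rw [Real.norm_of_nonneg (by positivity), Real.norm_of_nonneg (by positivity)]
  nlinarith [sum_card_divisors_le hx]

lemma card_le_add_sum_div {s : Finset ℕ} {N : ℕ} {f : ℕ → ℝ} {M y : ℝ} (hs : s ⊆ Ioc 0 N)
    (hf : ∀ n, 0 ≤ f n) (hM : 0 < M) (hy : 0 ≤ y) (hMf : ∀ n ∈ s, y < n → M ≤ f n) :
    (#s : ℝ) ≤ y + (∑ n ∈ Ioc 0 N, f n) / M := by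
  have hsmall : (#(s.filter fun n : ℕ => ¬ y < n) : ℝ) ≤ y := by
    have hsub : s.filter (fun n : ℕ => ¬ y < n) ⊆ Ioc 0 ⌊y⌋₊ := fun n hn => by
      obtain ⟨hns, hny⟩ := mem_filter.1 hn
      exact mem_Ioc.2 ⟨(mem_Ioc.1 (hs hns)).1, Nat.le_floor (not_lt.1 hny)⟩
    have hcard := card_le_card hsub
    rw [Nat.card_Ioc, Nat.sub_zero] at hcard
    exact (Nat.cast_le.2 hcard).trans (Nat.floor_le hy)
  have hlarge : (#(s.filter fun n : ℕ => y < n) : ℝ) ≤ (∑ n ∈ Ioc 0 N, f n) / M := by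
    rw [le_div_iff₀ hM, ← nsmul_eq_mul]
    calc #(s.filter fun n : ℕ => y < n) • M
        ≤ ∑ n ∈ s.filter (fun n : ℕ => y < n), f n :=
          card_nsmul_le_sum _ _ _ fun n hn => hMf n (mem_filter.1 hn).1 (mem_filter.1 hn).2
      _ ≤ ∑ n ∈ Ioc 0 N, f n :=
          sum_le_sum_of_subset_of_nonneg ((filter_subset _ _).trans hs) fun n _ _ => hf n
  have hsplit : (#(s.filter fun n : ℕ => y < n) : ℝ) + #(s.filter fun n : ℕ => ¬ y < n) = #s :=
    mod_cast card_filter_add_card_filter_not _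
  linarith

lemma card_filter_rpow_log_le_div_le {f : ℕ → ℝ} {a c x : ℝ} (ha : 0 ≤ a) (hf : ∀ n, 0 ≤ f n)
    (hx : 1 < x) (hsum : ∑ n ∈ Ioc 0 ⌊x⌋₊, f n ≤ c * (x * Real.log x)) :
    (#((Ioc 0 ⌊x⌋₊).filter fun n : ℕ => Real.log n ^ a ≤ f n) : ℝ) / x
      ≤ (√x)⁻¹ + 2 * c * Real.log √x ^ (-(a - 1)) := by
  have hx0 : 0 < x := by linarith
  have hsqrt : 0 < √x := Real.sqrt_pos.2 hx0
  have hlog_sqrt : 0 < Real.log √x := Real.log_pos (Real.lt_sqrt_of_sq_lt (by simpa using hx))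
  have hlog : Real.log x = 2 * Real.log √x := by rw [Real.log_sqrt hx0.le]; ring
  have hcard : (#((Ioc 0 ⌊x⌋₊).filter fun n : ℕ => Real.log n ^ a ≤ f n) : ℝ)
      ≤ √x + (∑ n ∈ Ioc 0 ⌊x⌋₊, f n) / Real.log √x ^ a := by
    refine card_le_add_sum_div (filter_subset _ _) hf (by positivity) hsqrt.le
      fun n hn hlt => le_trans ?_ (mem_filter.1 hn).2
    gcongr
  calc (#((Ioc 0 ⌊x⌋₊).filter fun n : ℕ => Real.log n ^ a ≤ f n) : ℝ) / x
      ≤ (√x + c * (x * Real.log x) / Real.log √x ^ a) / x := by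
        gcongr
        exact hcard.trans (by gcongr)
    _ = √x / x + 2 * c * (Real.log √x / Real.log √x ^ a) := by
        rw [hlog]
        field_simp
    _ = (√x)⁻¹ + 2 * c * Real.log √x ^ (-(a - 1)) := by
        rw [Real.sqrt_div_self, neg_sub, Real.rpow_sub hlog_sqrt, Real.rpow_one]

lemma tendsto_card_filter_rpow_log_le_div {f : ℕ → ℝ} {a : ℝ} (ha : 1 < a) (hf : ∀ n, 0 ≤ f n)
    (hsum : (fun x : ℝ => ∑ n ∈ Ioc 0 ⌊x⌋₊, f n) =O[Filter.atTop] fun x => x * Real.log x) :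
    Filter.Tendsto
      (fun x : ℝ => (#((Ioc 0 ⌊x⌋₊).filter fun n : ℕ => Real.log n ^ a ≤ f n) : ℝ) / x)
      Filter.atTop (nhds 0) := by
  obtain ⟨c, hc⟩ := hsum.bound
  have hbound : Filter.Tendsto (fun x : ℝ => (√x)⁻¹ + 2 * c * Real.log √x ^ (-(a - 1)))
      Filter.atTop (nhds 0) := by
    have hlog := Real.tendsto_log_atTop.comp Real.tendsto_sqrt_atTop
    simpa using (tendsto_inv_atTop_zero.comp Real.tendsto_sqrt_atTop).add
      (((tendsto_rpow_neg_atTop (sub_pos.2 ha)).comp hlog).const_mul (2 * c))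
  refine squeeze_zero' ?_ ?_ hbound
  · filter_upwards [Filter.eventually_ge_atTop 0] with x hx
    positivity
  · filter_upwards [Filter.eventually_gt_atTop 1, hc] with x hx hcx
    have hlog : 0 < Real.log x := Real.log_pos hx
    rw [Real.norm_of_nonneg (sum_nonneg fun n _ => hf n),
      Real.norm_of_nonneg (by positivity)] at hcx
    exact card_filter_rpow_log_le_div_le (by linarith) hf hx hcx

lemma rpow_log_le_card_divisors {n : ℕ} {C : ℝ} (hn : 1 < n)
    (h : C * Real.log (Real.log n) ≤ #n.primeFactors) :
    Real.log n ^ (C * Real.log 2) ≤ #n.divisors := by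
  have hlog : 0 < Real.log n := Real.log_pos (mod_cast hn)
  calc Real.log n ^ (C * Real.log 2)
      = (2 : ℝ) ^ (C * Real.log (Real.log n)) := by
        rw [Real.rpow_def_of_pos hlog, Real.rpow_def_of_pos two_pos]
        ring_nf
    _ ≤ (2 : ℝ) ^ (#n.primeFactors : ℝ) := Real.rpow_le_rpow_of_exponent_le one_le_two h
    _ ≤ #n.divisors := by
        rw [Real.rpow_natCast]
        exact_mod_cast two_pow_card_primeFactors_le_card_divisors (by omega)

theorem omega_almost_all_le_general {C : ℝ} (hC : 1 < C * Real.log 2) :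
    Filter.Tendsto
      (fun x : ℝ =>
        (#((Icc 3 ⌊x⌋₊).filter fun n : ℕ => C * Real.log (Real.log n) < #n.primeFactors) : ℝ)
          / x)
      Filter.atTop (nhds 0) := by
  refine squeeze_zero' ?_ ?_ (tendsto_card_filter_rpow_log_le_div hC
    (fun n => Nat.cast_nonneg #n.divisors) isBigO_sum_card_divisors)
  all_goals filter_upwards [Filter.eventually_ge_atTop 0] with x hx
  · positivity
  · gcongr
    intro n hn
    obtain ⟨hn, hω⟩ := mem_filter.1 hn
    obtain ⟨hn3, hnx⟩ := mem_Icc.1 hn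
    exact mem_filter.2 ⟨mem_Ioc.2 ⟨by omega, hnx⟩, rpow_log_le_card_divisors (by omega) hω.le⟩

/-- There is `C > 0` such that almost every integer `n` satisfies
`ω(n) ≤ C log log n`: the proportion of `3 ≤ n ≤ x` with `ω(n) > C log log n` tends
to `0` as `x → ∞`. -/
theorem omega_almost_all_le :
    ∃ C : ℝ, 0 < C ∧
      Filter.Tendsto
        (fun x : ℝ =>
          (((Finset.Icc 3 ⌊x⌋₊).filter
              (fun n : ℕ => C * Real.log (Real.log n) < (n.primeFactors.card : ℝ))).card : ℝ)
            / x)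
        Filter.atTop (nhds 0) :=
  ⟨2, two_pos, omega_almost_all_le_general (by linarith [Real.log_two_gt_d9])⟩
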